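/- arXiv:1909.09255 — 6 statements merged into one kernel-verified Lean document; each statement's English description precedes it below -/
import Mathlib

section
/- Let n ≥ 2 and let M = (m_{ij}) be an n×n complex matrix all of whose entries in the first row and first column are nonzero. Then there exist diagonal unitary matrices D_L = diag(e^{iφ_1},…,e^{iφ_n}) and D_R = diag(1, e^{iψ_1},…,e^{iψ_{n-1}}) (φ_i, ψ_i real) such that every entry of D_L · M · D_R is a real number, if and only if Im(m_{11} · m_{kl} · conj(m_{1l}) · conj(m_{k1})) = 0 for all k, l ∈ {2, …, n}. -/
lemma aux_exp_neg (z : ℂ) :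
    (‖z‖ : ℂ) * Complex.exp (((-z.arg : ℝ) : ℂ) * Complex.I) = (starRingEnd ℂ) z := by
  conv_rhs => rw [← Complex.norm_mul_exp_arg_mul_I z]
  rw [map_mul, ← Complex.exp_conj]
  simp

lemma aux_unit (t : ℝ) : Complex.exp ((t : ℂ) * Complex.I) *
    (starRingEnd ℂ) (Complex.exp ((t : ℂ) * Complex.I)) = 1 := by
  rw [← Complex.exp_conj, ← Complex.exp_add]
  simp

/-- An `n × n` complex matrix `M` (with `n ≥ 2`) whose first-row
and first-column entries are all nonzero can be rephased to a matrix with all real entries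
by `D_L = diag(e^{iφ₁},…,e^{iφₙ})` and `D_R = diag(1, e^{iψ₁},…,e^{iψ_{n-1}})`
if and only if `Im(m₁₁ m_{kl} m̄_{1l} m̄_{k1}) = 0` for all `k, l ∈ {2,…,n}`. -/
theorem jarlskog_rephasing_to_real_entries
    (n : ℕ) (hn : 2 ≤ n) (M : Matrix (Fin n) (Fin n) ℂ)
    (hrow : ∀ j : Fin n, M ⟨0, by omega⟩ j ≠ 0)
    (hcol : ∀ i : Fin n, M i ⟨0, by omega⟩ ≠ 0) :
    (∃ φ ψ : Fin n → ℝ, ψ ⟨0, by omega⟩ = 0 ∧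
      ∀ i j : Fin n,
        ((Matrix.diagonal (fun i => Complex.exp ((φ i : ℂ) * Complex.I)) * M *
          Matrix.diagonal (fun j => Complex.exp ((ψ j : ℂ) * Complex.I))) i j).im = 0) ↔
    (∀ k l : Fin n, k ≠ ⟨0, by omega⟩ → l ≠ ⟨0, by omega⟩ →
      (M ⟨0, by omega⟩ ⟨0, by omega⟩ * M k l *
        (starRingEnd ℂ) (M ⟨0, by omega⟩ l) *
        (starRingEnd ℂ) (M k ⟨0, by omega⟩)).im = 0) := by
  simp only [Matrix.mul_diagonal, Matrix.diagonal_mul]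
  generalize hz : (⟨0, by omega⟩ : Fin n) = o at *
  constructor
  · rintro ⟨φ, ψ, -, h⟩ k l - -
    simp only [← Complex.conj_eq_iff_im] at h ⊢
    have key : M o o * M k l * (starRingEnd ℂ) (M o l) * (starRingEnd ℂ) (M k o) =
        (Complex.exp (φ o * Complex.I) * M o o * Complex.exp (ψ o * Complex.I)) *
        (Complex.exp (φ k * Complex.I) * M k l * Complex.exp (ψ l * Complex.I)) *
        (starRingEnd ℂ) (Complex.exp (φ o * Complex.I) * M o l * Complex.exp (ψ l * Complex.I)) *
        (starRingEnd ℂ)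
          (Complex.exp (φ k * Complex.I) * M k o * Complex.exp (ψ o * Complex.I)) := by
      have h1 := aux_unit (φ o)
      have h2 := aux_unit (φ k)
      have h3 := aux_unit (ψ o)
      have h4 := aux_unit (ψ l)
      simp only [map_mul]
      generalize Complex.exp (φ o * Complex.I) = a at *
      generalize Complex.exp (φ k * Complex.I) = b at *
      generalize Complex.exp (ψ o * Complex.I) = c at *
      generalize Complex.exp (ψ l * Complex.I) = d at *
      calc _ = M o o * M k l * (starRingEnd ℂ) (M o l) * (starRingEnd ℂ) (M k o) *
            ((a * (starRingEnd ℂ) a) * (b * (starRingEnd ℂ) b) * (c * (starRingEnd ℂ) c) *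
              (d * (starRingEnd ℂ) d)) := by rw [h1, h2, h3, h4]; ring
        _ = _ := by ring
    rw [key, map_mul, map_mul, map_mul, h o o, h k l, h o l, h k o, h o l, h k o]
  · intro h
    have hJ : ∀ k l, (M o o * M k l * (starRingEnd ℂ) (M o l) *
        (starRingEnd ℂ) (M k o)).im = 0 := by
      intro k l
      by_cases hk : k = o
      · subst hk
        rw [← Complex.conj_eq_iff_im]
        simp only [map_mul, Complex.conj_conj]
        ring
      by_cases hl : l = o
      · subst hl
        rw [← Complex.conj_eq_iff_im]
        simp only [map_mul, Complex.conj_conj]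
        ring
      exact h k l hk hl
    refine ⟨fun i => -(M i o).arg, fun j => (M o o).arg + -(M o j).arg, by simp, ?_⟩
    intro i j
    have key : M o o * M i j * (starRingEnd ℂ) (M o j) * (starRingEnd ℂ) (M i o) =
        ((‖M o o‖ * ‖M o j‖ * ‖M i o‖ : ℝ) : ℂ) *
        (Complex.exp (((-(M i o).arg : ℝ) : ℂ) * Complex.I) * M i j *
          Complex.exp ((((M o o).arg + -(M o j).arg : ℝ) : ℂ) * Complex.I)) := by
      rw [← aux_exp_neg (M o j), ← aux_exp_neg (M i o), Complex.ofReal_add, add_mul,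
        Complex.exp_add]
      conv_lhs => rw [← Complex.norm_mul_exp_arg_mul_I (M o o)]
      push_cast
      ring
    have h2 := hJ i j
    rw [key, Complex.im_ofReal_mul] at h2
    refine (mul_eq_zero.mp h2).resolve_left ?_
    have := hrow o
    have := hrow j
    have := hcol i
    positivity
end

section
/- Let V be a 3×3 unitary complex matrix. Then Im(V_{11} V_{22} conj(V_{12}) conj(V_{21})) + Im(V_{11} V_{32} conj(V_{12}) conj(V_{31})) = 0 and Im(V_{11} V_{22} conj(V_{12}) conj(V_{21})) + Im(V_{11} V_{23} conj(V_{13}) conj(V_{21})) = 0. Consequently, if for a 3×3 complex matrix V either of these two sums is nonzero, then V is not unitary. -/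
/-- **test for a fourth generation.** For a `3 × 3` unitary complex matrix `V`
(1-based indices in the paper correspond to 0-based `Fin 3` indices here):
`Im(V₁₁V₂₂V̄₁₂V̄₂₁) + Im(V₁₁V₃₂V̄₁₂V̄₃₁) = 0` and
`Im(V₁₁V₂₂V̄₁₂V̄₂₁) + Im(V₁₁V₂₃V̄₁₃V̄₂₁) = 0`; consequently, if either of these sums is
nonzero for a `3 × 3` complex matrix `V`, then `V` is not unitary. -/
theorem jarlskog_ckm3_unitarity_test :
    (∀ V : Matrix (Fin 3) (Fin 3) ℂ, V ∈ Matrix.unitaryGroup (Fin 3) ℂ →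
      (V 0 0 * V 1 1 * (starRingEnd ℂ) (V 0 1) * (starRingEnd ℂ) (V 1 0)).im +
        (V 0 0 * V 2 1 * (starRingEnd ℂ) (V 0 1) * (starRingEnd ℂ) (V 2 0)).im = 0 ∧
      (V 0 0 * V 1 1 * (starRingEnd ℂ) (V 0 1) * (starRingEnd ℂ) (V 1 0)).im +
        (V 0 0 * V 1 2 * (starRingEnd ℂ) (V 0 2) * (starRingEnd ℂ) (V 1 0)).im = 0) ∧
    (∀ V : Matrix (Fin 3) (Fin 3) ℂ,
      ((V 0 0 * V 1 1 * (starRingEnd ℂ) (V 0 1) * (starRingEnd ℂ) (V 1 0)).im +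
        (V 0 0 * V 2 1 * (starRingEnd ℂ) (V 0 1) * (starRingEnd ℂ) (V 2 0)).im ≠ 0 ∨
       (V 0 0 * V 1 1 * (starRingEnd ℂ) (V 0 1) * (starRingEnd ℂ) (V 1 0)).im +
        (V 0 0 * V 1 2 * (starRingEnd ℂ) (V 0 2) * (starRingEnd ℂ) (V 1 0)).im ≠ 0) →
      V ∉ Matrix.unitaryGroup (Fin 3) ℂ) := by
  have key : ∀ V : Matrix (Fin 3) (Fin 3) ℂ, V ∈ Matrix.unitaryGroup (Fin 3) ℂ →
      (V 0 0 * V 1 1 * (starRingEnd ℂ) (V 0 1) * (starRingEnd ℂ) (V 1 0)).im +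
        (V 0 0 * V 2 1 * (starRingEnd ℂ) (V 0 1) * (starRingEnd ℂ) (V 2 0)).im = 0 ∧
      (V 0 0 * V 1 1 * (starRingEnd ℂ) (V 0 1) * (starRingEnd ℂ) (V 1 0)).im +
        (V 0 0 * V 1 2 * (starRingEnd ℂ) (V 0 2) * (starRingEnd ℂ) (V 1 0)).im = 0 := by
    intro V hV
    have h1 := congrFun (congrFun (Matrix.mem_unitaryGroup_iff'.mp hV) 0) 1
    have h2 := congrFun (congrFun (Matrix.mem_unitaryGroup_iff.mp hV) 1) 0
    simp only [Matrix.mul_apply, Fin.sum_univ_three, Matrix.star_apply,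
      Matrix.one_apply, Fin.reduceEq, if_false, ← starRingEnd_apply] at h1 h2
    have e1 := congrArg (fun z => (V 0 0 * (starRingEnd ℂ) (V 0 1) * z).im) h1
    have e2 := congrArg (fun z => (V 0 0 * (starRingEnd ℂ) (V 1 0) * z).im) h2
    simp only [Complex.mul_im, Complex.mul_re, Complex.add_im, Complex.add_re,
      Complex.conj_re, Complex.conj_im, Complex.zero_re, Complex.zero_im] at e1 e2 ⊢
    norm_num at e1 e2
    constructor
    · linear_combination e1
    · linear_combination e2
  refine ⟨key, fun V h hV => ?_⟩
  rcases h with h | h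
  · exact h (key V hV).1
  · exact h (key V hV).2
end

section
/- Let α_{12}, α_{13}, α_{14}, α_{23}, α_{24}, α_{34}, β_{13}, β_{14}, β_{24} be real numbers, write c_{ij} = cos α_{ij}, s_{ij} = sin α_{ij}, and assume all twelve quantities c_{12}, c_{13}, c_{14}, c_{23}, c_{24}, c_{34}, s_{12}, s_{13}, s_{14}, s_{23}, s_{24}, s_{34} are nonzero. Define J₁ = −sin β_{14} · c_{13} c_{14}² c_{24} s_{13} s_{14} s_{23} s_{24}; J₂ = cos β_{14} sin β_{13} · c_{12} c_{13} c_{14}² c_{23} c_{24} s_{12} s_{14} s_{24} + cos β_{13} sin β_{14} · c_{12} c_{13} c_{14}² c_{23} c_{24} s_{12} s_{14} s_{24} + sin β_{14} · c_{12}² c_{13} c_{14}² c_{24} s_{13} s_{14} s_{23} s_{24}; and J₃ = −sin β_{24} · c_{13} c_{14}² c_{23} c_{24} c_{34} s_{13} s_{14} s_{34} + sin β_{14} · c_{13} c_{14}² c_{24} s_{13} s_{14} s_{23} s_{24} s_{34}². Then (J₁ = 0 and J₂ = 0 and J₃ = 0) if and only if (sin β_{13} = 0 and sin β_{14} = 0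 and sin β_{24} = 0). -/
open Real

/-- **Theorem 3.** For generic mixing angles, the three Jarlskog invariants
`J₁`, `J₂`, `J₃` of the CKM4 matrix vanish simultaneously iff all three CP phases vanish:
`sin β₁₃ = 0`, `sin β₁₄ = 0` and `sin β₂₄ = 0`. -/
theorem jarlskog_CP_conservation_SM4
    (α₁₂ α₁₃ α₁₄ α₂₃ α₂₄ α₃₄ β₁₃ β₁₄ β₂₄ : ℝ)
    (hc12 : cos α₁₂ ≠ 0) (hc13 : cos α₁₃ ≠ 0) (hc14 : cos α₁₄ ≠ 0)
    (hc23 : cos α₂₃ ≠ 0) (hc24 : cos α₂₄ ≠ 0) (hc34 : cos α₃₄ ≠ 0)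
    (hs12 : sin α₁₂ ≠ 0) (hs13 : sin α₁₃ ≠ 0) (hs14 : sin α₁₄ ≠ 0)
    (hs23 : sin α₂₃ ≠ 0) (hs24 : sin α₂₄ ≠ 0) (hs34 : sin α₃₄ ≠ 0) :
    (-sin β₁₄ * cos α₁₃ * (cos α₁₄) ^ 2 * cos α₂₄ * sin α₁₃ * sin α₁₄ * sin α₂₃ * sin α₂₄ = 0 ∧
      cos β₁₄ * sin β₁₃ * cos α₁₂ * cos α₁₃ * (cos α₁₄) ^ 2 * cos α₂₃ * cos α₂₄ *
          sin α₁₂ * sin α₁₄ * sin α₂₄ +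
        cos β₁₃ * sin β₁₄ * cos α₁₂ * cos α₁₃ * (cos α₁₄) ^ 2 * cos α₂₃ * cos α₂₄ *
          sin α₁₂ * sin α₁₄ * sin α₂₄ +
        sin β₁₄ * (cos α₁₂) ^ 2 * cos α₁₃ * (cos α₁₄) ^ 2 * cos α₂₄ *
          sin α₁₃ * sin α₁₄ * sin α₂₃ * sin α₂₄ = 0 ∧
      -sin β₂₄ * cos α₁₃ * (cos α₁₄) ^ 2 * cos α₂₃ * cos α₂₄ * cos α₃₄ *
          sin α₁₃ * sin α₁₄ * sin α₃₄ +
        sin β₁₄ * cos α₁₃ * (cos α₁₄) ^ 2 * cos α₂₄ *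
          sin α₁₃ * sin α₁₄ * sin α₂₃ * sin α₂₄ * (sin α₃₄) ^ 2 = 0) ↔
    (sin β₁₃ = 0 ∧ sin β₁₄ = 0 ∧ sin β₂₄ = 0) := by
  constructor
  · rintro ⟨h1, h2, h3⟩
    have hb : sin β₁₄ = 0 := by
      simpa [hc13, hc14, hc24, hs13, hs14, hs23, hs24] using h1
    have hcb : cos β₁₄ ≠ 0 := by
      intro h
      have := sin_sq_add_cos_sq β₁₄
      rw [hb, h] at this
      norm_num at this
    refine ⟨?_, hb, ?_⟩
    · simpa [hb, hcb, hc12, hc13, hc14, hc23, hc24, hs12, hs14, hs24] using h2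
    · simpa [hb, hc13, hc14, hc23, hc24, hc34, hs13, hs14, hs34] using h3
  · rintro ⟨h1, h2, h3⟩
    simp [h1, h2, h3]
end

section
/- Let α_{12}, α_{13}, α_{14}, α_{23}, α_{24}, α_{34}, β_{13}, β_{14}, β_{24} be real numbers, write c_{ij} = cos α_{ij}, s_{ij} = sin α_{ij}, and assume all twelve quantities c_{12}, c_{13}, c_{14}, c_{23}, c_{24}, c_{34}, s_{12}, s_{13}, s_{14}, s_{23}, s_{24}, s_{34} are nonzero. Define J₁ = −sin β_{14} · c_{13} c_{14}² c_{24} s_{13} s_{14} s_{23} s_{24}; J₂ = cos β_{14} sin β_{13} · c_{12} c_{13} c_{14}² c_{23} c_{24} s_{12} s_{14} s_{24} + cos β_{13} sin β_{14} · c_{12} c_{13} c_{14}² c_{23} c_{24} s_{12} s_{14} s_{24} + sin β_{14} · c_{12}² c_{13} c_{14}² c_{24} s_{13} s_{14} s_{23} s_{24}; and J₃ = −sin β_{24} · c_{13} c_{14}² c_{23} c_{24} c_{34} s_{13} s_{14} s_{34} + sin β_{14} · c_{13} c_{14}² c_{24} s_{13} s_{14} s_{23} s_{24} s_{34}². Then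 (J₁ ≠ 0 or J₂ ≠ 0 or J₃ ≠ 0) if and only if (sin β_{13} ≠ 0 or sin β_{14} ≠ 0 or sin β_{24} ≠ 0). -/
open Real

/-- **Theorem 4.** For generic mixing angles, at least one of the three
Jarlskog invariants `J₁`, `J₂`, `J₃` of the CKM4 matrix is nonzero iff at least one of the
CP phases is nonvanishing: `sin β₁₃ ≠ 0` or `sin β₁₄ ≠ 0` or `sin β₂₄ ≠ 0`. -/
theorem jarlskog_CP_violation_SM4
    (α₁₂ α₁₃ α₁₄ α₂₃ α₂₄ α₃₄ β₁₃ β₁₄ β₂₄ : ℝ)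
    (hc12 : cos α₁₂ ≠ 0) (hc13 : cos α₁₃ ≠ 0) (hc14 : cos α₁₄ ≠ 0)
    (hc23 : cos α₂₃ ≠ 0) (hc24 : cos α₂₄ ≠ 0) (hc34 : cos α₃₄ ≠ 0)
    (hs12 : sin α₁₂ ≠ 0) (hs13 : sin α₁₃ ≠ 0) (hs14 : sin α₁₄ ≠ 0)
    (hs23 : sin α₂₃ ≠ 0) (hs24 : sin α₂₄ ≠ 0) (hs34 : sin α₃₄ ≠ 0) :
    (-sin β₁₄ * cos α₁₃ * (cos α₁₄) ^ 2 * cos α₂₄ * sin α₁₃ * sin α₁₄ * sin α₂₃ * sin α₂₄ ≠ 0 ∨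
      cos β₁₄ * sin β₁₃ * cos α₁₂ * cos α₁₃ * (cos α₁₄) ^ 2 * cos α₂₃ * cos α₂₄ *
          sin α₁₂ * sin α₁₄ * sin α₂₄ +
        cos β₁₃ * sin β₁₄ * cos α₁₂ * cos α₁₃ * (cos α₁₄) ^ 2 * cos α₂₃ * cos α₂₄ *
          sin α₁₂ * sin α₁₄ * sin α₂₄ +
        sin β₁₄ * (cos α₁₂) ^ 2 * cos α₁₃ * (cos α₁₄) ^ 2 * cos α₂₄ *
          sin α₁₃ * sin α₁₄ * sin α₂₃ * sin α₂₄ ≠ 0 ∨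
      -sin β₂₄ * cos α₁₃ * (cos α₁₄) ^ 2 * cos α₂₃ * cos α₂₄ * cos α₃₄ *
          sin α₁₃ * sin α₁₄ * sin α₃₄ +
        sin β₁₄ * cos α₁₃ * (cos α₁₄) ^ 2 * cos α₂₄ *
          sin α₁₃ * sin α₁₄ * sin α₂₃ * sin α₂₄ * (sin α₃₄) ^ 2 ≠ 0) ↔
    (sin β₁₃ ≠ 0 ∨ sin β₁₄ ≠ 0 ∨ sin β₂₄ ≠ 0) := by
  by_cases h : sin β₁₄ = 0
  · have hc : cos β₁₄ ≠ 0 := by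
      intro h0
      have := sin_sq_add_cos_sq β₁₄
      rw [h, h0] at this
      norm_num at this
    simp [h, hc, hc12, hc13, hc14, hc23, hc24, hc34, hs12, hs13, hs14, hs23, hs24, hs34]
  · refine iff_of_true (Or.inl ?_) (Or.inr (Or.inl h))
    simp [h, hc13, hc14, hc24, hs13, hs14, hs23, hs24]
end

section
/- Let M = (m_{ij}) be an n×n complex matrix (n ≥ 2) and suppose M = D_L · M̃ · D_R where M̃ is the matrix with entries |m_{ij}|, D_L = diag(e^{iφ_1},…,e^{iφ_n}), and D_R = diag(1, e^{iψ_1},…,e^{iψ_{n-1}}) with φ_i, ψ_i real. Then for all k, l ∈ {2,…,n}, Im(m_{11} · m_{kl} · conj(m_{1l}) · conj(m_{k1})) = 0. -/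
/-- **forward implication of Theorem 1.** If an `n × n` complex matrix `M`
(`n ≥ 2`) factors as `M = D_L • M̃ • D_R` with `M̃` the matrix of moduli `|m_{ij}|`,
`D_L = diag(e^{iφ₁},…,e^{iφₙ})` and `D_R = diag(1, e^{iψ₁},…,e^{iψ_{n-1}})`, then
`Im(m₁₁ m_{kl} m̄_{1l} m̄_{k1}) = 0` for all `k, l ∈ {2,…,n}`. -/
theorem jarlskog_rephasing_forward
    (n : ℕ) (hn : 2 ≤ n) (M : Matrix (Fin n) (Fin n) ℂ)
    (φ ψ : Fin n → ℝ) (hψ : ψ ⟨0, by omega⟩ = 0)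
    (hM : M = Matrix.diagonal (fun i => Complex.exp ((φ i : ℂ) * Complex.I)) *
        (Matrix.of fun i j => (‖M i j‖ : ℂ)) *
        Matrix.diagonal (fun j => Complex.exp ((ψ j : ℂ) * Complex.I))) :
    ∀ k l : Fin n, k ≠ ⟨0, by omega⟩ → l ≠ ⟨0, by omega⟩ →
      (M ⟨0, by omega⟩ ⟨0, by omega⟩ * M k l *
        (starRingEnd ℂ) (M ⟨0, by omega⟩ l) *
        (starRingEnd ℂ) (M k ⟨0, by omega⟩)).im = 0 := by
  intro k l _ _
  have h : ∀ i j, ∃ r : ℝ, M i j = Complex.exp ((φ i : ℂ) * Complex.I) * (r : ℂ) *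
      Complex.exp ((ψ j : ℂ) * Complex.I) := by
    intro i j
    refine ⟨‖M i j‖, ?_⟩
    have h1 := congrFun (congrFun hM i) j
    rw [Matrix.mul_diagonal, Matrix.diagonal_mul] at h1
    exact h1
  have key : ∀ (a b c d : ℂ) (p q r s : ℝ),
      ((a * p * c) * (b * q * d) * (starRingEnd ℂ) (a * r * d) *
        (starRingEnd ℂ) (b * s * c)).im = 0 := by
    intro a b c d p q r s
    have e : (a * p * c) * (b * q * d) * (starRingEnd ℂ) (a * r * d) *
        (starRingEnd ℂ) (b * s * c) =
        ((p * q * r * s * Complex.normSq a * Complex.normSq b * Complex.normSq c *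
          Complex.normSq d : ℝ) : ℂ) := by
      push_cast
      simp only [← Complex.mul_conj, map_mul, Complex.conj_ofReal]
      ring
    rw [e, Complex.ofReal_im]
  obtain ⟨p, hp⟩ := h ⟨0, by omega⟩ ⟨0, by omega⟩
  obtain ⟨q, hq⟩ := h k l
  obtain ⟨r, hr⟩ := h ⟨0, by omega⟩ l
  obtain ⟨s, hs⟩ := h k ⟨0, by omega⟩
  rw [hp, hq, hr, hs]
  exact key _ _ _ _ p q r s
end

section
/- Let n ≥ 2 and let M = (m_{ij}) be an n×n complex matrix all of whose entries in the first row and first column are nonzero, and suppose that for all k, l ∈ {2,…,n} there exists ε_{kl} ∈ {0, π} such that arg(m_{11}) + arg(m_{kl}) − arg(m_{1l}) − arg(m_{k1}) ≡ ε_{kl} (mod 2π) whenever m_{kl} ≠ 0. Then, setting φ_k = arg(m_{k1}) for k = 1,…,n and ψ_{l-1} = arg(m_{1l}) − arg(m_{11}) for l = 2,…,n, D_L = diag(e^{iφ_1},…,e^{iφ_n}) and D_R = diag(1, e^{iψ_1},…,e^{iψ_{n-1}}), the matrix conj(D_L) · M · conj(D_R) has all real entries. -/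
theorem rephase_aux (z : ℂ) (a b : ℝ)
    (h : z ≠ 0 → ∃ m : ℤ, Complex.arg z - a - b = m * Real.pi) :
    ((starRingEnd ℂ) (Complex.exp ((a : ℂ) * Complex.I)) * z *
      (starRingEnd ℂ) (Complex.exp ((b : ℂ) * Complex.I))).im = 0 := by
  by_cases hz : z = 0
  · simp [hz]
  obtain ⟨m, hm⟩ := h hz
  have key : (starRingEnd ℂ) (Complex.exp ((a : ℂ) * Complex.I)) * z *
      (starRingEnd ℂ) (Complex.exp ((b : ℂ) * Complex.I)) =
      ((‖z‖ : ℝ) : ℂ) * Complex.exp (((m * Real.pi : ℝ) : ℂ) * Complex.I) := by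
    conv_lhs => rw [← Complex.norm_mul_exp_arg_mul_I z]
    rw [← hm, ← Complex.exp_conj, ← Complex.exp_conj]
    simp only [map_mul, Complex.conj_ofReal, Complex.conj_I]
    rw [mul_left_comm, mul_assoc, mul_assoc, ← Complex.exp_add, ← Complex.exp_add]
    congr 2
    push_cast
    ring
  rw [key, Complex.im_ofReal_mul, Complex.exp_ofReal_mul_I_im, Real.sin_int_mul_pi, mul_zero]

/-- **reverse implication of Theorem 1, explicit construction.**
Let `M` be an `n × n` complex matrix (`n ≥ 2`) with nonzero first-row and first-column
entries, such that for all `k, l ∈ {2,…,n}` there is `ε_{kl} ∈ {0, π}` with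
`arg m₁₁ + arg m_{kl} − arg m_{1l} − arg m_{k1} ≡ ε_{kl} (mod 2π)` whenever `m_{kl} ≠ 0`.
Setting `φ_k = arg m_{k1}` and `ψ_{l-1} = arg m_{1l} − arg m₁₁` (so the first diagonal
entry of `D_R` equals `1`), the matrix `conj(D_L) ⬝ M ⬝ conj(D_R)` has all real entries. -/
theorem jarlskog_rephasing_reverse_construction
    (n : ℕ) (hn : 2 ≤ n) (M : Matrix (Fin n) (Fin n) ℂ)
    (hrow : ∀ j : Fin n, M ⟨0, by omega⟩ j ≠ 0)
    (hcol : ∀ i : Fin n, M i ⟨0, by omega⟩ ≠ 0)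
    (harg : ∀ k l : Fin n, k ≠ ⟨0, by omega⟩ → l ≠ ⟨0, by omega⟩ →
      ∃ ε : ℝ, (ε = 0 ∨ ε = Real.pi) ∧
        (M k l ≠ 0 → ∃ t : ℤ,
          Complex.arg (M ⟨0, by omega⟩ ⟨0, by omega⟩) + Complex.arg (M k l) -
            Complex.arg (M ⟨0, by omega⟩ l) - Complex.arg (M k ⟨0, by omega⟩)
            = ε + 2 * Real.pi * t)) :
    ∀ i j : Fin n,
      ((Matrix.diagonal (fun k =>
          (starRingEnd ℂ) (Complex.exp ((Complex.arg (M k ⟨0, by omega⟩) : ℂ) * Complex.I))) *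
        M *
        Matrix.diagonal (fun l =>
          (starRingEnd ℂ) (Complex.exp
            (((Complex.arg (M ⟨0, by omega⟩ l) -
               Complex.arg (M ⟨0, by omega⟩ ⟨0, by omega⟩) : ℝ) : ℂ) * Complex.I)))) i j).im
        = 0 := by
  intro i j
  rw [Matrix.mul_diagonal, Matrix.diagonal_mul]
  apply rephase_aux
  intro hz
  by_cases hj : j = ⟨0, by omega⟩
  · subst hj
    exact ⟨0, by simp⟩
  by_cases hi : i = ⟨0, by omega⟩
  · subst hi
    exact ⟨0, by push_cast; ring⟩
  obtain ⟨ε, hε, h⟩ := harg i j hi hj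
  obtain ⟨t, ht⟩ := h hz
  rcases hε with rfl | rfl
  · exact ⟨2 * t, by push_cast; linarith⟩
  · exact ⟨2 * t + 1, by push_cast; linarith⟩
end
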